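/- For ℓ = 2: assume there exists a set cover for R (with parameter Δ), and let S be a set cover of R̃_2 of size k. Then the set of line segments C = { τ_{i,j} : r_{i,j} ∈ S } has size at most k and satisfies φ(P,C) ≤ 6Δ. -/

import Mathlib

open Set

noncomputable section

/-- Points in `ℝ^d`. -/
abbrev Pt (d : ℕ) : Type := EuclideanSpace ℝ (Fin d)

/-- A reparametrization: a continuous strictly increasing bijection of `[0,1]` onto itself. -/
def IsReparam (γ : ℝ → ℝ) : Prop :=
  ContinuousOn γ (Icc 0 1) ∧ StrictMonoOn γ (Icc 0 1) ∧ γ '' Icc 0 1 = Icc 0 1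

/-- The Fréchet distance `d_F(P,Q) = inf_γ sup_{t ∈ [0,1]} ‖P(γ(t)) - Q(t)‖`
(only the values of the curves on `[0,1]` are relevant). -/
def frechetDist {d : ℕ} (P Q : ℝ → Pt d) : ℝ :=
  ⨅ γ : {γ : ℝ → ℝ // IsReparam γ}, ⨆ s : Icc (0:ℝ) 1, ‖P (γ.1 s.1) - Q s.1‖

/-- The linearly parametrized line segment from `a` to `b`. -/
def seg {d : ℕ} (a b : Pt d) : ℝ → Pt d := fun s => (1 - s) • a + s • b

/-- The subcurve `P[a,b]` of `P`, linearly reparametrized over `[0,1]`. -/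
def subcurve {d : ℕ} (P : ℝ → Pt d) (a b : ℝ) : ℝ → Pt d := fun s => P (a + s * (b - a))

/-- The polygonal curve with vertex sequence `pts 0, …, pts n`, uniformly
parametrized over `[0,1]`. -/
def polyline {d n : ℕ} (pts : Fin (n + 1) → Pt d) : ℝ → Pt d := fun s =>
  if h : n = 0 then pts 0
  else
    let i : ℕ := min ⌊s * n⌋₊ (n - 1)
    have hi : i < n := lt_of_le_of_lt (min_le_right _ _) (by omega)
    (1 - (s * n - i)) • pts ⟨i, hi.trans n.lt_succ_self⟩ +
      (s * n - i) • pts ⟨i + 1, Nat.succ_lt_succ hi⟩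

/-- `f ∈ 𝕏^d_ℓ`: `f` is a polygonal curve with at most `ℓ` vertices. -/
def IsPolygonal {d : ℕ} (f : ℝ → Pt d) (ℓ : ℕ) : Prop :=
  ∃ n : ℕ, n + 1 ≤ ℓ ∧ ∃ pts : Fin (n + 1) → Pt d, f = polyline pts

/-- Concatenation of two curves (each parametrized over `[0,1]`). -/
def concat {d : ℕ} (f g : ℝ → Pt d) : ℝ → Pt d := fun s =>
  if s ≤ 1 / 2 then f (2 * s) else g (2 * s - 1)

/-- `CostLE P m t C Δ` states that the clustering cost satisfies `φ(P,C) ≤ Δ`: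
there is a family `I` of index pairs `(i,j)`, `1 ≤ i < j ≤ m`, with
`⋃_{(i,j) ∈ I} [t i, t j] = [0,1]`, such that every corresponding subcurve is
within Fréchet distance `Δ` of some center in `C`. -/
def CostLE {d : ℕ} (P : ℝ → Pt d) (m : ℕ) (t : ℕ → ℝ) (C : Set (ℝ → Pt d)) (Δ : ℝ) : Prop :=
  ∃ I : Set (ℕ × ℕ),
    (∀ q ∈ I, 1 ≤ q.1 ∧ q.1 < q.2 ∧ q.2 ≤ m) ∧
    (⋃ q ∈ I, Icc (t q.1) (t q.2)) = Icc (0:ℝ) 1 ∧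
    ∀ q ∈ I, ∃ c ∈ C, frechetDist (subcurve P (t q.1) (t q.2)) c ≤ Δ

/-- The set `r_Q` of the set system `R` (ground set `{1,…,m−1}`):
`r_Q = {z : ∃ i ≤ z < j, d_F(Q, P[t_i,t_j]) ≤ Δ}`. -/
def rSet {d : ℕ} (P : ℝ → Pt d) (m : ℕ) (t : ℕ → ℝ) (Δ : ℝ) (Q : ℝ → Pt d) : Set ℕ :=
  {z | 1 ≤ z ∧ z < m ∧ ∃ i j, 1 ≤ i ∧ i ≤ z ∧ z < j ∧ j ≤ m ∧
    frechetDist Q (subcurve P (t i) (t j)) ≤ Δ}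

/-- The set `r_{i,j}` of the set system `R̃₂` (case `ℓ = 2`). -/
def rTilde2 {d : ℕ} (P : ℝ → Pt d) (m : ℕ) (t : ℕ → ℝ) (Δ : ℝ)
    (xz yz : ℕ → ℕ) (i j : ℕ) : Set ℕ :=
  {z | 1 ≤ z ∧ z < m ∧ ∃ x y, xz z ≤ x ∧ x ≤ z ∧ z + 1 ≤ y ∧ y ≤ yz z ∧
    frechetDist (polyline (n := 3) ![P (t x), P (t z), P (t (z+1)), P (t y)])
      (seg (P (t i)) (P (t j))) ≤ 2 * Δ}

/-!
Fix `z`, and take from the cover of `R̃₂` a segment `τ` and indices `x ≤ z < y` such that the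
polygonal curve through the vertices at `x`, `z`, `z + 1`, `y` is within `2Δ` of `τ`. This curve is
within `4Δ` of `P[t_x,t_y]`, edge by edge: for the outer edges by the choice of `x_z` and `y_z`, and
for the middle edge because the cover of `R` puts `P[t_z,t_{z+1}]` within `Δ` of a piece of a
segment, and replacing this piece by the edge costs another `Δ`. The triangle inequality then puts
`P[t_x,t_y]`, which covers `[t_z,t_{z+1}]`, within `6Δ` of `τ`.

If `x = z` or `y = z + 1`, an outer edge degenerates to a point, and strictly increasing
reparametrizations of the edges cannot be glued together. The matchings are therefore only required
to be weakly increasing; perturbing them to strictly increasing ones costs arbitrarily little, so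
the Fréchet distance is unchanged.
-/

section Traversals

/-- A weakly increasing continuous traversal of the parameter interval `[a,b]` in unit time, used
to match curves monotonically. It is a function on all of `ℝ`, but only its values on `[0,1]`
matter. -/
structure IsTraversal (α : ℝ → ℝ) (a b : ℝ) : Prop where
  continuous : Continuous α
  monotone : Monotone α
  map_zero : α 0 = a
  map_one : α 1 = b

variable {α α' : ℝ → ℝ} {a b c : ℝ}

lemma isTraversal_affine (hab : a ≤ b) : IsTraversal (fun s => a + s * (b - a)) a b where
  continuous := by fun_prop
  monotone := (monotone_mul_right_of_nonneg (sub_nonneg.2 hab)).const_add a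
  map_zero := by ring
  map_one := by ring

lemma IsTraversal.mapsTo (h : IsTraversal α a b) : MapsTo α (Icc 0 1) (Icc a b) := by
  rw [← h.map_zero, ← h.map_one]
  exact h.monotone.mapsTo_Icc

lemma IsTraversal.comp {φ : ℝ → ℝ} (h : IsTraversal α a b) (hc : Continuous φ) (hm : Monotone φ) :
    IsTraversal (φ ∘ α) (φ a) (φ b) where
  continuous := hc.comp h.continuous
  monotone := hm.comp h.monotone
  map_zero := congrArg φ h.map_zero
  map_one := congrArg φ h.map_one

lemma IsTraversal.exists_append (h : IsTraversal α a b) (h' : IsTraversal α' b c) :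
    ∃ σ, IsTraversal σ a c ∧ (∀ s ≤ 1 / 2, σ s = α (2 * s)) ∧
      ∀ s ≥ 1 / 2, σ s = α' (2 * s - 1) := by
  have hα := h.continuous
  have hα' := h'.continuous
  have left : ∀ s ≤ (1 / 2 : ℝ), α (min (2 * s) 1) + α' (max (2 * s - 1) 0) - b = α (2 * s) := by
    intro s hs
    rw [min_eq_left (by linarith), max_eq_right (by linarith), h'.map_zero, add_sub_cancel_right]
  have right : ∀ s ≥ (1 / 2 : ℝ),
      α (min (2 * s) 1) + α' (max (2 * s - 1) 0) - b = α' (2 * s - 1) := by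
    intro s hs
    rw [min_eq_right (by linarith), max_eq_left (by linarith), h.map_one, add_sub_cancel_left]
  refine ⟨fun s => α (min (2 * s) 1) + α' (max (2 * s - 1) 0) - b, ⟨by fun_prop, ?_, ?_, ?_⟩,
    left, right⟩
  · intro x y hxy
    dsimp only
    gcongr
    · exact h.monotone (by gcongr)
    · exact h'.monotone (by gcongr)
  · rw [left 0 (by norm_num), mul_zero, h.map_zero]
  · rw [right 1 (by norm_num), ← h'.map_one]
    norm_num

-- Mixing in a small multiple of the identity makes a traversal strictly increasing.
lemma IsTraversal.exists_orderIso_dist_le (h : IsTraversal α 0 1) {η : ℝ} (hη : 0 < η) :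
    ∃ F : ℝ ≃o ℝ, F 0 = 0 ∧ F 1 = 1 ∧ ∀ s ∈ Icc (0 : ℝ) 1, dist (F s) (α s) ≤ η := by
  obtain ⟨w, hw, hwη⟩ := exists_between (lt_min hη one_pos)
  obtain ⟨hwη, hw1⟩ := lt_min_iff.1 hwη
  have hα := h.continuous
  have hmono : Monotone fun s => (1 - w) * α s := h.monotone.const_mul (sub_nonneg.2 hw1.le)
  have hsurj : Function.Surjective fun s => (1 - w) * α s + w * s := by
    refine Continuous.surjective (by fun_prop) ?_ ?_
    · refine Filter.tendsto_atTop_add_left_of_le' _ ((1 - w) * α 0) ?_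
        (Filter.tendsto_id.const_mul_atTop hw)
      filter_upwards [Filter.eventually_ge_atTop 0] with s hs using hmono hs
    · refine Filter.tendsto_atBot_add_left_of_ge' _ ((1 - w) * α 0) ?_
        (Filter.tendsto_id.const_mul_atBot hw)
      filter_upwards [Filter.eventually_le_atBot 0] with s hs using hmono hs
  refine ⟨StrictMono.orderIsoOfSurjective _
    (hmono.add_strictMono (strictMono_id.const_mul hw)) hsurj, ?_, ?_, fun s hs => ?_⟩
  · simp [h.map_zero]
  · simp [h.map_one]
  · calc dist ((1 - w) * α s + w * s) (α s) = w * dist s (α s) := by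
          rw [Real.dist_eq, Real.dist_eq, ← abs_of_pos hw, ← abs_mul, abs_of_pos hw]
          ring_nf
      _ ≤ w * 1 := by gcongr; exact Real.dist_le_of_mem_Icc_01 hs (h.mapsTo hs)
      _ ≤ η := by rw [mul_one]; exact hwη.le

end Traversals

section Reparametrizations

variable {γ η : ℝ → ℝ}

lemma isReparam_id : IsReparam id :=
  ⟨continuousOn_id, strictMonoOn_id, image_id _⟩

lemma IsReparam.mapsTo (h : IsReparam γ) : MapsTo γ (Icc 0 1) (Icc 0 1) :=
  mapsTo_iff_image_subset.2 h.2.2.subset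

lemma IsReparam.comp (hγ : IsReparam γ) (hη : IsReparam η) : IsReparam (γ ∘ η) :=
  ⟨hγ.1.comp hη.1 hη.mapsTo, hγ.2.1.comp hη.2.1 hη.mapsTo, by rw [image_comp, hη.2.2, hγ.2.2]⟩

lemma isReparam_orderIso (F : ℝ ≃o ℝ) (h0 : F 0 = 0) (h1 : F 1 = 1) : IsReparam F :=
  ⟨F.continuous.continuousOn, F.strictMono.strictMonoOn _, by rw [F.image_Icc, h0, h1]⟩

lemma IsReparam.isTraversal_IccExtend (h : IsReparam γ) :
    IsTraversal (IccExtend zero_le_one fun s : Icc (0 : ℝ) 1 => γ s) 0 1 where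
  continuous := h.1.domRestrict.Icc_extend'
  monotone := h.2.1.monotoneOn.monotone.IccExtend zero_le_one
  map_zero := by
    have hleast := h.2.1.monotoneOn.map_isLeast (isLeast_Icc zero_le_one)
    rw [h.2.2] at hleast
    simpa using hleast.unique (isLeast_Icc zero_le_one)
  map_one := by
    have hgreatest := h.2.1.monotoneOn.map_isGreatest (isGreatest_Icc zero_le_one)
    rw [h.2.2] at hgreatest
    simpa using hgreatest.unique (isGreatest_Icc zero_le_one)

end Reparametrizations

section Matchings

variable {E : Type*} [PseudoMetricSpace E]

/-- A single reparametrization witnesses Fréchet distance at most `δ` between `f` and `g`. -/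
def Close (f g : ℝ → E) (δ : ℝ) : Prop :=
  ∃ γ, IsReparam γ ∧ ∀ s ∈ Icc (0 : ℝ) 1, dist (f (γ s)) (g s) ≤ δ

/-- The weak form of `Close`, for subcurves: `f` on `[a,b]` and `g` on `[c,e]` can be traversed
simultaneously, possibly pausing on either of them, while staying within distance `δ`. Unlike for
`Close`, degenerate intervals are allowed, and matchings can be concatenated and restricted. -/
def Matched (f : ℝ → E) (a b : ℝ) (g : ℝ → E) (c e δ : ℝ) : Prop :=
  ∃ α β, IsTraversal α a b ∧ IsTraversal β c e ∧ ∀ s ∈ Icc (0 : ℝ) 1, dist (f (α s)) (g (β s)) ≤ δ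

variable {f f' g h : ℝ → E} {a b a' c e c' u v δ δ' : ℝ}

lemma Close.trans (hfg : Close f g δ) (hgh : Close g h δ') : Close f h (δ + δ') := by
  obtain ⟨γ, hγ, hfg⟩ := hfg
  obtain ⟨η, hη, hgh⟩ := hgh
  exact ⟨γ ∘ η, hγ.comp hη, fun s hs => (dist_triangle _ (g (η s)) _).trans
    (add_le_add (hfg _ (hη.mapsTo hs)) (hgh s hs))⟩

lemma Close.matched (hfg : Close f g δ) : Matched f 0 1 g 0 1 δ := by
  obtain ⟨γ, hγ, hfg⟩ := hfg
  refine ⟨_, id, hγ.isTraversal_IccExtend, ⟨continuous_id, monotone_id, rfl, rfl⟩, fun s hs => ?_⟩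
  rw [IccExtend_of_mem _ _ hs]
  exact hfg s hs

lemma Matched.symm (hfg : Matched f a b g c e δ) : Matched g c e f a b δ := by
  obtain ⟨α, β, hα, hβ, hfg⟩ := hfg
  exact ⟨β, α, hβ, hα, fun s hs => dist_comm (f (α s)) _ ▸ hfg s hs⟩

lemma Matched.mono (hfg : Matched f a b g c e δ) (hδ : δ ≤ δ') : Matched f a b g c e δ' := by
  obtain ⟨α, β, hα, hβ, hfg⟩ := hfg
  exact ⟨α, β, hα, hβ, fun s hs => (hfg s hs).trans hδ⟩

lemma Matched.dist_left_le (hfg : Matched f a b g c e δ) : dist (f a) (g c) ≤ δ := by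
  obtain ⟨α, β, hα, hβ, hfg⟩ := hfg
  simpa only [hα.map_zero, hβ.map_zero] using hfg 0 (left_mem_Icc.2 zero_le_one)

lemma Matched.dist_right_le (hfg : Matched f a b g c e δ) : dist (f b) (g e) ≤ δ := by
  obtain ⟨α, β, hα, hβ, hfg⟩ := hfg
  simpa only [hα.map_one, hβ.map_one] using hfg 1 (right_mem_Icc.2 zero_le_one)

lemma Matched.congr_left (hfg : Matched f a b g c e δ) (hf : EqOn f f' (Icc a b)) :
    Matched f' a b g c e δ := by
  obtain ⟨α, β, hα, hβ, hfg⟩ := hfg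
  exact ⟨α, β, hα, hβ, fun s hs => hf (hα.mapsTo hs) ▸ hfg s hs⟩

lemma Matched.of_comp_left {φ : ℝ → ℝ} (hfg : Matched (f ∘ φ) a b g c e δ) (hc : Continuous φ)
    (hm : Monotone φ) : Matched f (φ a) (φ b) g c e δ := by
  obtain ⟨α, β, hα, hβ, hfg⟩ := hfg
  exact ⟨φ ∘ α, β, hα.comp hc hm, hβ, hfg⟩

lemma Matched.append (hfg : Matched f a b g c e δ) (hfg' : Matched f b a' g e c' δ) :
    Matched f a a' g c c' δ := by
  obtain ⟨α, β, hα, hβ, hfg⟩ := hfg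
  obtain ⟨α', β', hα', hβ', hfg'⟩ := hfg'
  obtain ⟨σ, hσ, hσl, hσr⟩ := hα.exists_append hα'
  obtain ⟨τ, hτ, hτl, hτr⟩ := hβ.exists_append hβ'
  refine ⟨σ, τ, hσ, hτ, fun s hs => ?_⟩
  rcases le_total s (1 / 2) with hs' | hs'
  · rw [hσl s hs', hτl s hs']
    exact hfg _ ⟨by linarith [hs.1], by linarith⟩
  · rw [hσr s hs', hτr s hs']
    exact hfg' _ ⟨by linarith, by linarith [hs.2]⟩

lemma matched_of_forall_castSucc_succ {n : ℕ} (u v : Fin (n + 2) → ℝ)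
    (hfg : ∀ i : Fin (n + 1), Matched f (u i.castSucc) (u i.succ) g (v i.castSucc) (v i.succ) δ) :
    Matched f (u 0) (u (Fin.last _)) g (v 0) (v (Fin.last _)) δ := by
  induction n with
  | zero => exact hfg 0
  | succ n ih =>
    exact (ih (u ∘ Fin.castSucc) (v ∘ Fin.castSucc) fun i => hfg i.castSucc).append
      (hfg (Fin.last _))

lemma Matched.exists_restrict (hfg : Matched f a b g c e δ) (hcu : c ≤ u) (huv : u ≤ v)
    (hve : v ≤ e) : ∃ x y, a ≤ x ∧ x ≤ y ∧ y ≤ b ∧ Matched f x y g u v δ := by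
  obtain ⟨α, β, hα, hβ, hfg⟩ := hfg
  obtain ⟨p, hp, hpu⟩ : u ∈ β '' Icc 0 1 := intermediate_value_Icc zero_le_one
    hβ.continuous.continuousOn (by rw [hβ.map_zero, hβ.map_one]; exact ⟨hcu, huv.trans hve⟩)
  obtain ⟨q, hq, hqv⟩ : v ∈ β '' Icc p 1 := intermediate_value_Icc hp.2
    hβ.continuous.continuousOn (by rw [hpu, hβ.map_one]; exact ⟨huv, hve⟩)
  have hσ := isTraversal_affine hq.1
  refine ⟨α p, α q, (hα.mapsTo hp).1, hα.monotone hq.1, (hα.mapsTo ⟨hp.1.trans hq.1, hq.2⟩).2,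
    _, _, hσ.comp hα.continuous hα.monotone, hpu ▸ hqv ▸ hσ.comp hβ.continuous hβ.monotone,
    fun s hs => hfg _ (Icc_subset_Icc hp.1 hq.2 (hσ.mapsTo hs))⟩

lemma Matched.close (hf : ContinuousOn f (Icc 0 1)) (hg : ContinuousOn g (Icc 0 1))
    (hfg : Matched f 0 1 g 0 1 δ) (hδ : δ < δ') : Close f g δ' := by
  obtain ⟨α, β, hα, hβ, hfg⟩ := hfg
  have hε : 0 < (δ' - δ) / 2 := by linarith
  obtain ⟨r, hr, hfr⟩ := Metric.uniformContinuousOn_iff_le.1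
    (isCompact_Icc.uniformContinuousOn_of_continuous hf) _ hε
  obtain ⟨r', hr', hgr⟩ := Metric.uniformContinuousOn_iff_le.1
    (isCompact_Icc.uniformContinuousOn_of_continuous hg) _ hε
  obtain ⟨F, hF0, hF1, hFα⟩ := hα.exists_orderIso_dist_le hr
  obtain ⟨G, hG0, hG1, hGβ⟩ := hβ.exists_orderIso_dist_le hr'
  have hF := isReparam_orderIso F hF0 hF1
  have hG := isReparam_orderIso G hG0 hG1
  have hGsymm : IsReparam G.symm := isReparam_orderIso G.symm
    (by rw [G.symm_apply_eq, hG0]) (by rw [G.symm_apply_eq, hG1])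
  have hFG : ∀ s ∈ Icc (0 : ℝ) 1, dist (f (F s)) (g (G s)) ≤ δ' := fun s hs =>
    calc dist (f (F s)) (g (G s))
        ≤ dist (f (F s)) (f (α s)) + dist (f (α s)) (g (β s)) + dist (g (β s)) (g (G s)) :=
          dist_triangle4 ..
      _ ≤ (δ' - δ) / 2 + δ + (δ' - δ) / 2 := by
          gcongr
          · exact hfr _ (hF.mapsTo hs) _ (hα.mapsTo hs) (hFα s hs)
          · exact hfg s hs
          · exact hgr _ (hβ.mapsTo hs) _ (hG.mapsTo hs) (dist_comm (β s) _ ▸ hGβ s hs)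
      _ = δ' := by ring
  refine ⟨F ∘ G.symm, hF.comp hGsymm, fun s hs => ?_⟩
  simpa using hFG _ (hGsymm.mapsTo hs)

end Matchings

section FrechetDistance

variable {d : ℕ} {f g h : ℝ → Pt d} {δ : ℝ}

lemma Close.frechetDist_le (hfg : Close f g δ) : frechetDist f g ≤ δ := by
  obtain ⟨γ, hγ, hfg⟩ := hfg
  have : Nonempty (Icc (0 : ℝ) 1) := ⟨0, left_mem_Icc.2 zero_le_one⟩
  refine (ciInf_le ⟨0, ?_⟩ ⟨γ, hγ⟩).trans (ciSup_le fun s => dist_eq_norm (f _) _ ▸ hfg s s.2)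
  rintro _ ⟨γ', rfl⟩
  exact Real.iSup_nonneg fun s => norm_nonneg _

-- Continuity bounds the suprema in `frechetDist`, which would otherwise have the junk value `0`.
lemma close_of_frechetDist_lt (hf : ContinuousOn f (Icc 0 1)) (hg : ContinuousOn g (Icc 0 1))
    (hfg : frechetDist f g < δ) : Close f g δ := by
  have : Nonempty {γ : ℝ → ℝ // IsReparam γ} := ⟨⟨id, isReparam_id⟩⟩
  obtain ⟨⟨γ, hγ⟩, hlt⟩ := exists_lt_of_ciInf_lt hfg
  obtain ⟨A, hA⟩ := isCompact_Icc.exists_bound_of_continuousOn hf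
  obtain ⟨B, hB⟩ := isCompact_Icc.exists_bound_of_continuousOn hg
  have hbdd : BddAbove (range fun s : Icc (0 : ℝ) 1 => ‖f (γ s) - g s‖) := by
    refine ⟨A + B, ?_⟩
    rintro _ ⟨s, rfl⟩
    exact (norm_sub_le _ _).trans (add_le_add (hA _ (hγ.mapsTo s.2)) (hB _ s.2))
  refine ⟨γ, hγ, fun s hs => ?_⟩
  rw [dist_eq_norm]
  exact (le_ciSup hbdd ⟨s, hs⟩).trans hlt.le

lemma frechetDist_le_of_forall_dist_le (hfg : ∀ s ∈ Icc (0 : ℝ) 1, dist (f s) (g s) ≤ δ) :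
    frechetDist f g ≤ δ :=
  Close.frechetDist_le ⟨id, isReparam_id, hfg⟩

lemma frechetDist_triangle (hf : ContinuousOn f (Icc 0 1)) (hg : ContinuousOn g (Icc 0 1))
    (hh : ContinuousOn h (Icc 0 1)) : frechetDist f h ≤ frechetDist f g + frechetDist g h := by
  refine le_of_forall_pos_le_add fun ε hε => ?_
  have hfg : Close f g (frechetDist f g + ε / 2) := close_of_frechetDist_lt hf hg (by linarith)
  have hgh : Close g h (frechetDist g h + ε / 2) := close_of_frechetDist_lt hg hh (by linarith)
  linarith [(hfg.trans hgh).frechetDist_le]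

lemma frechetDist_le_iff_matched (hf : ContinuousOn f (Icc 0 1)) (hg : ContinuousOn g (Icc 0 1)) :
    frechetDist f g ≤ δ ↔ ∀ δ' > δ, Matched f 0 1 g 0 1 δ' := by
  refine ⟨fun hfg δ' hδ => (close_of_frechetDist_lt hf hg (hfg.trans_lt hδ)).matched,
    fun hfg => le_of_forall_gt_imp_ge_of_dense fun δ'' hδ => ?_⟩
  obtain ⟨δ', hδ', hδ''⟩ := exists_between hδ
  exact ((hfg δ' hδ').close hf hg hδ'').frechetDist_le

end FrechetDistance

section Subcurves

variable {d : ℕ} {f g : ℝ → Pt d} {a b c e δ : ℝ}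

lemma subcurve_zero_one (f : ℝ → Pt d) : subcurve f 0 1 = f := by
  ext1 s
  simp [subcurve]

lemma continuousOn_subcurve (hab : a ≤ b) (hf : ContinuousOn f (Icc a b)) :
    ContinuousOn (subcurve f a b) (Icc 0 1) :=
  hf.comp (by fun_prop) (isTraversal_affine hab).mapsTo

lemma matched_subcurve_left (hab : a ≤ b) :
    Matched (subcurve f a b) 0 1 g c e δ ↔ Matched f a b g c e δ := by
  have hφ := isTraversal_affine hab
  constructor
  · intro hfg
    simpa using Matched.of_comp_left (φ := fun s => a + s * (b - a)) hfg hφ.continuous hφ.monotone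
  rcases hab.eq_or_lt with rfl | hab
  · rintro ⟨α, β, hα, hβ, hfg⟩
    refine ⟨id, β, ⟨continuous_id, monotone_id, rfl, rfl⟩, hβ, fun s hs => ?_⟩
    have hαs : α s = a := by simpa using hα.mapsTo hs
    simpa [subcurve, hαs] using hfg s hs
  · intro hfg
    have hba : 0 < b - a := sub_pos.2 hab
    have hinv : f = subcurve f a b ∘ fun w => (w - a) / (b - a) := by
      ext1 w
      simp [subcurve, hba.ne']
    rw [hinv] at hfg
    simpa [hba.ne'] using hfg.of_comp_left (by fun_prop)
      fun x y hxy => div_le_div_of_nonneg_right (sub_le_sub_right hxy a) hba.le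

lemma frechetDist_subcurve_subcurve_le_iff (hab : a ≤ b) (hf : ContinuousOn f (Icc a b))
    (hce : c ≤ e) (hg : ContinuousOn g (Icc c e)) :
    frechetDist (subcurve f a b) (subcurve g c e) ≤ δ ↔ ∀ δ' > δ, Matched f a b g c e δ' := by
  rw [frechetDist_le_iff_matched (continuousOn_subcurve hab hf) (continuousOn_subcurve hce hg)]
  refine forall₂_congr fun δ' _ => (matched_subcurve_left hab).trans ?_
  exact ⟨fun hfg => ((matched_subcurve_left hce).1 hfg.symm).symm,
    fun hfg => ((matched_subcurve_left hce).2 hfg.symm).symm⟩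

lemma frechetDist_subcurve_right_le_iff (hf : ContinuousOn f (Icc 0 1)) (hce : c ≤ e)
    (hg : ContinuousOn g (Icc c e)) :
    frechetDist f (subcurve g c e) ≤ δ ↔ ∀ δ' > δ, Matched f 0 1 g c e δ' := by
  rw [← frechetDist_subcurve_subcurve_le_iff zero_le_one hf hce hg, subcurve_zero_one]

end Subcurves

section Segments

variable {d : ℕ} {p p' q q' : Pt d} {δ : ℝ}

lemma continuous_seg (p q : Pt d) : Continuous (seg p q) := by
  unfold seg
  fun_prop

lemma subcurve_seg (x y : ℝ) : subcurve (seg p q) x y = seg (seg p q x) (seg p q y) := by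
  ext1 s
  simp only [subcurve, seg]
  module

lemma frechetDist_seg_seg_le (hp : dist p p' ≤ δ) (hq : dist q q' ≤ δ) :
    frechetDist (seg p q) (seg p' q') ≤ δ := by
  refine frechetDist_le_of_forall_dist_le fun s hs => ?_
  have hs' : 0 ≤ 1 - s := sub_nonneg.2 hs.2
  calc dist (seg p q s) (seg p' q' s)
      ≤ dist ((1 - s) • p) ((1 - s) • p') + dist (s • q) (s • q') := dist_add_add_le ..
    _ = (1 - s) * dist p p' + s * dist q q' := by
        rw [dist_smul₀, dist_smul₀, Real.norm_of_nonneg hs', Real.norm_of_nonneg hs.1]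
    _ ≤ (1 - s) * δ + s * δ := by gcongr; exact hs.1
    _ = δ := by ring

-- `P[u,v]` is close to a piece of `pq`, whose endpoints are then close to `P u` and `P v`.
lemma frechetDist_seg_subcurve_le_two_mul {P : ℝ → Pt d} {a b u v : ℝ} (hau : a ≤ u)
    (huv : u ≤ v) (hvb : v ≤ b) (hP : ContinuousOn P (Icc a b))
    (hpq : frechetDist (seg p q) (subcurve P a b) ≤ δ) :
    frechetDist (seg (P u) (P v)) (subcurve P u v) ≤ 2 * δ := by
  have hPuv : ContinuousOn P (Icc u v) := hP.mono (Icc_subset_Icc hau hvb)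
  rw [frechetDist_subcurve_right_le_iff (continuous_seg p q).continuousOn
    (hau.trans (huv.trans hvb)) hP] at hpq
  refine le_of_forall_pos_le_add fun ε hε => ?_
  obtain ⟨x, y, -, hxy, -, hmatch⟩ :=
    (hpq (δ + ε / 2) (by linarith)).exists_restrict hau huv hvb
  have hseg : frechetDist (seg (P u) (P v)) (subcurve (seg p q) x y) ≤ δ + ε / 2 := by
    rw [subcurve_seg]
    exact frechetDist_seg_seg_le hmatch.symm.dist_left_le hmatch.symm.dist_right_le
  have hsub : frechetDist (subcurve (seg p q) x y) (subcurve P u v) ≤ δ + ε / 2 :=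
    (frechetDist_subcurve_subcurve_le_iff hxy (continuous_seg p q).continuousOn huv hPuv).2
      fun δ' hδ' => hmatch.mono hδ'.le
  have htri := frechetDist_triangle (continuous_seg (P u) (P v)).continuousOn
    (continuousOn_subcurve hxy (continuous_seg p q).continuousOn) (continuousOn_subcurve huv hPuv)
  linarith

end Segments

lemma exists_mem_Icc_succ {α : Type*} [LinearOrder α] (t : ℕ → α) {a b : ℕ} (hab : a < b) {w : α}
    (hw : w ∈ Icc (t a) (t b)) : ∃ i ∈ Ico a b, w ∈ Icc (t i) (t (i + 1)) := by
  induction b, hab using Nat.le_induction with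
  | base => exact ⟨a, ⟨le_rfl, Nat.lt_succ_self a⟩, hw⟩
  | succ b hab ih =>
    rcases le_total w (t b) with hwb | hwb
    · obtain ⟨i, hi, hwi⟩ := ih ⟨hw.1, hwb⟩
      exact ⟨i, ⟨hi.1, hi.2.trans b.lt_succ_self⟩, hwi⟩
    · exact ⟨b, ⟨Nat.le_of_succ_le hab, b.lt_succ_self⟩, hwb, hw.2⟩

section Polylines

variable {d n : ℕ} {P : ℝ → Pt d} {δ : ℝ}

lemma IsPolygonal.exists_eq_seg {Q : ℝ → Pt d} (hQ : IsPolygonal Q 2) : ∃ p q, Q = seg p q := by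
  obtain ⟨n, hn, pts, rfl⟩ := hQ
  obtain rfl | rfl : n = 0 ∨ n = 1 := by omega
  · refine ⟨pts 0, pts 0, ?_⟩
    ext1 s
    simp [polyline, seg, ← add_smul]
  · refine ⟨pts 0, pts 1, ?_⟩
    ext1 s
    simp [polyline, seg]

lemma polyline_div_eq_seg (pts : Fin (n + 2) → Pt d) (i : Fin (n + 1)) {s : ℝ}
    (hs : s ∈ Icc (0 : ℝ) 1) :
    polyline pts ((i + s) / (n + 1)) = seg (pts i.castSucc) (pts i.succ) s := by
  have hcancel : (i + s) / (n + 1 : ℝ) * (n + 1) = i + s := by field_simp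
  have hfloor : min ⌊i + s⌋₊ n = i ∨ min ⌊i + s⌋₊ n = i + 1 ∧ s = 1 := by
    rcases hs.2.eq_or_lt with rfl | hs1
    · rw [Nat.floor_add_one i.val.cast_nonneg, Nat.floor_natCast]
      simp only [and_true]
      omega
    · left
      rw [Nat.floor_eq_on_Ico i _ ⟨by linarith [hs.1], by linarith⟩, min_eq_left i.is_le]
  unfold polyline seg
  simp only [Nat.add_eq_zero_iff, one_ne_zero, and_false, dite_false, Nat.cast_succ, hcancel,
    Nat.add_sub_cancel]
  rcases hfloor with hfloor | ⟨hfloor, rfl⟩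
  · simp only [hfloor, add_sub_cancel_left]
    rfl
  · simp [hfloor, Fin.succ]

lemma continuousOn_polyline (pts : Fin (n + 1) → Pt d) :
    ContinuousOn (polyline pts) (Icc 0 1) := by
  cases n with
  | zero => exact continuousOn_const
  | succ n =>
    let edge (i : Fin (n + 1)) : Set ℝ := Icc (i / (n + 1)) ((i + 1) / (n + 1))
    have hn : (0 : ℝ) < n + 1 := n.cast_add_one_pos
    have hedge (i) : ContinuousOn (polyline pts) (edge i) := by
      have hseg : Continuous fun s : ℝ => seg (pts i.castSucc) (pts i.succ) (s * (n + 1) - i) :=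
        (continuous_seg _ _).comp (by fun_prop)
      refine hseg.continuousOn.congr fun s ⟨hs, hs'⟩ => ?_
      rw [div_le_iff₀ hn] at hs
      rw [le_div_iff₀ hn] at hs'
      have hpoly := polyline_div_eq_seg pts i (s := s * (n + 1) - i) ⟨by linarith, by linarith⟩
      rwa [add_sub_cancel, mul_div_cancel_right₀ _ hn.ne'] at hpoly
    refine ((locallyFinite_of_finite edge).continuousOn_iUnion (fun i => isClosed_Icc) hedge).mono
      fun s hs => ?_
    obtain ⟨i, hi, hsi⟩ := exists_mem_Icc_succ (fun i : ℕ => (i : ℝ) / (n + 1)) n.succ_pos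
      (w := s) (by simpa [hn.ne'] using hs)
    exact mem_iUnion.2 ⟨⟨i, hi.2⟩, by simpa [edge] using hsi⟩

lemma frechetDist_subcurve_polyline_le {u : Fin (n + 2) → ℝ} (hu : Monotone u)
    (hP : ContinuousOn P (Icc (u 0) (u (Fin.last _))))
    (hedge : ∀ i : Fin (n + 1), frechetDist (seg (P (u i.castSucc)) (P (u i.succ)))
      (subcurve P (u i.castSucc) (u i.succ)) ≤ δ) :
    frechetDist (subcurve P (u 0) (u (Fin.last _))) (polyline (P ∘ u)) ≤ δ := by
  have hn : (0 : ℝ) < n + 1 := n.cast_add_one_pos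
  rw [← subcurve_zero_one (polyline _), frechetDist_subcurve_subcurve_le_iff (hu (Fin.zero_le _)) hP
    zero_le_one (continuousOn_polyline _)]
  intro δ' hδ
  have hmatch (i : Fin (n + 1)) : Matched P (u i.castSucc) (u i.succ) (polyline (P ∘ u))
      ((i.castSucc : ℕ) / (n + 1)) ((i.succ : ℕ) / (n + 1)) δ' := by
    have hPi : ContinuousOn P (Icc (u i.castSucc) (u i.succ)) :=
      hP.mono (Icc_subset_Icc (hu (Fin.zero_le _)) (hu (Fin.le_last _)))
    have hseg := (frechetDist_subcurve_right_le_iff (continuous_seg _ _).continuousOn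
      (hu (Fin.castSucc_le_succ i)) hPi).1 (hedge i) δ' hδ
    have hpoly := (hseg.congr_left (f' := polyline (P ∘ u) ∘ fun s => (i + s) / (n + 1))
      fun s hs => (polyline_div_eq_seg (P ∘ u) i hs).symm).of_comp_left (by fun_prop)
      fun x y hxy => by dsimp only; gcongr
    simpa using hpoly.symm
  simpa [hn.ne'] using matched_of_forall_castSucc_succ u (fun i => (i : ℕ) / (n + 1)) hmatch

lemma frechetDist_subcurve_polyline_three_le {a b c e : ℝ} (hab : a ≤ b) (hbc : b ≤ c)
    (hce : c ≤ e) (hP : ContinuousOn P (Icc a e))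
    (hfirst : frechetDist (seg (P a) (P b)) (subcurve P a b) ≤ δ)
    (hmiddle : frechetDist (seg (P b) (P c)) (subcurve P b c) ≤ δ)
    (hlast : frechetDist (seg (P c) (P e)) (subcurve P c e) ≤ δ) :
    frechetDist (subcurve P a e) (polyline (n := 3) ![P a, P b, P c, P e]) ≤ δ := by
  have hu : Monotone ![a, b, c, e] := by simp [hab, hbc, hce]
  have hcomp : P ∘ ![a, b, c, e] = ![P a, P b, P c, P e] := by
    ext1 i
    fin_cases i <;> rfl
  have hle := frechetDist_subcurve_polyline_le (n := 2) (u := ![a, b, c, e]) (δ := δ) hu hP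
    (Fin.forall_fin_succ.2 ⟨hfirst, Fin.forall_fin_two.2 ⟨hmiddle, hlast⟩⟩)
  rwa [hcomp] at hle

end Polylines

lemma le_of_monotoneOn_Icc {α β : Type*} [Preorder α] [Preorder β] {f : α → β} {a b x y : α}
    (hf : MonotoneOn f (Icc a b)) (hax : a ≤ x) (hxy : x ≤ y) (hyb : y ≤ b) : f x ≤ f y :=
  hf ⟨hax, hxy.trans hyb⟩ ⟨hax.trans hxy, hyb⟩ hxy

section Clustering

variable {d m : ℕ} {P : ℝ → Pt d} {t : ℕ → ℝ} {Δ δ ε : ℝ}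

lemma costLE_of_forall_exists {C : Set (ℝ → Pt d)} (hm : 1 < m) (ht0 : t 1 = 0) (ht1 : t m = 1)
    (ht : MonotoneOn t (Icc 1 m))
    (hcover : ∀ z, 1 ≤ z → z < m → ∃ x y, 1 ≤ x ∧ x ≤ z ∧ z < y ∧ y ≤ m ∧
      ∃ c ∈ C, frechetDist (subcurve P (t x) (t y)) c ≤ Δ) :
    CostLE P m t C Δ := by
  refine ⟨{q | (1 ≤ q.1 ∧ q.1 < q.2 ∧ q.2 ≤ m) ∧
    ∃ c ∈ C, frechetDist (subcurve P (t q.1) (t q.2)) c ≤ Δ}, fun q hq => hq.1, ?_,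
    fun q hq => hq.2⟩
  refine Subset.antisymm (iUnion₂_subset ?_) fun w hw => ?_
  · rintro ⟨x, y⟩ ⟨⟨hx, hxy, hy⟩, -⟩
    rw [← ht0, ← ht1]
    exact Icc_subset_Icc (le_of_monotoneOn_Icc ht le_rfl hx (hxy.le.trans hy))
      (le_of_monotoneOn_Icc ht (hx.trans hxy.le) hy le_rfl)
  · rw [← ht0, ← ht1] at hw
    obtain ⟨z, ⟨hz, hzm⟩, hwz⟩ := exists_mem_Icc_succ t hm hw
    obtain ⟨x, y, hx, hxz, hzy, hy, hc⟩ := hcover z hz hzm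
    refine mem_iUnion₂.2 ⟨(x, y), ⟨⟨hx, hxz.trans_lt hzy, hy⟩, hc⟩, Icc_subset_Icc ?_ ?_ hwz⟩
    · exact le_of_monotoneOn_Icc ht hx hxz hzm.le
    · exact le_of_monotoneOn_Icc ht z.succ_pos hzy hy

/-- The analogue of `r_{i,j}` for an arbitrary center `c` and tolerances `δ`, `ε` in place of `4Δ`,
`2Δ`: the part of the ground set that `c` accounts for in `stmt9_general`. The bounds that `x_z` and
`y_z` guarantee on the two outer edges are required directly. -/
def rSimplified (P : ℝ → Pt d) (m : ℕ) (t : ℕ → ℝ) (δ ε : ℝ) (c : ℝ → Pt d) : Set ℕ :=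
  {z | 1 ≤ z ∧ z < m ∧ ∃ x y, 1 ≤ x ∧ x ≤ z ∧ z + 1 ≤ y ∧ y ≤ m ∧
    frechetDist (seg (P (t x)) (P (t z))) (subcurve P (t x) (t z)) ≤ δ ∧
    frechetDist (seg (P (t (z + 1))) (P (t y))) (subcurve P (t (z + 1)) (t y)) ≤ δ ∧
    frechetDist (polyline (n := 3) ![P (t x), P (t z), P (t (z + 1)), P (t y)]) c ≤ ε}

lemma rTilde2_subset_rSimplified {xz yz : ℕ → ℕ} {i j : ℕ}
    (hxz : ∀ z, 1 ≤ z → z < m → 1 ≤ xz z ∧ ∀ x, xz z ≤ x → x ≤ z →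
      frechetDist (seg (P (t x)) (P (t z))) (subcurve P (t x) (t z)) ≤ δ)
    (hyz : ∀ z, 1 ≤ z → z < m → yz z ≤ m ∧ ∀ y, z + 1 ≤ y → y ≤ yz z →
      frechetDist (seg (P (t (z + 1))) (P (t y))) (subcurve P (t (z + 1)) (t y)) ≤ δ) :
    rTilde2 P m t Δ xz yz i j ⊆ rSimplified P m t δ (2 * Δ) (seg (P (t i)) (P (t j))) := by
  rintro z ⟨hz, hzm, x, y, hx, hxz', hzy, hy, hfr⟩
  obtain ⟨hx1, hxle⟩ := hxz z hz hzm
  obtain ⟨hym, hyle⟩ := hyz z hz hzm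
  exact ⟨hz, hzm, x, y, hx1.trans hx, hxz', hzy, hy.trans hym, hxle x hx hxz', hyle y hzy hy, hfr⟩

lemma frechetDist_edge_le_of_mem_rSet (hP : ContinuousOn P (Icc (t 1) (t m)))
    (ht : MonotoneOn t (Icc 1 m)) {Q : ℝ → Pt d} (hQ : IsPolygonal Q 2) {z : ℕ}
    (hz : z ∈ rSet P m t Δ Q) :
    frechetDist (seg (P (t z)) (P (t (z + 1)))) (subcurve P (t z) (t (z + 1))) ≤ 2 * Δ := by
  obtain ⟨p, q, rfl⟩ := hQ.exists_eq_seg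
  obtain ⟨hz, hzm, i, j, hi, hiz, hzj, hj, hfr⟩ := hz
  have hPij : ContinuousOn P (Icc (t i) (t j)) := hP.mono <| Icc_subset_Icc
    (le_of_monotoneOn_Icc ht le_rfl hi (hiz.trans hzm.le))
    (le_of_monotoneOn_Icc ht (z.succ_pos.trans_le hzj) hj le_rfl)
  exact frechetDist_seg_subcurve_le_two_mul (le_of_monotoneOn_Icc ht hi hiz hzm.le)
    (le_of_monotoneOn_Icc ht hz z.le_succ hzm) (le_of_monotoneOn_Icc ht z.succ_pos hzj hj) hPij hfr

lemma exists_frechetDist_subcurve_le_of_mem_rSimplified (hP : ContinuousOn P (Icc (t 1) (t m)))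
    (ht : MonotoneOn t (Icc 1 m)) {c : ℝ → Pt d} (hc : ContinuousOn c (Icc 0 1)) {z : ℕ}
    (hz : z ∈ rSimplified P m t δ ε c)
    (hedge : frechetDist (seg (P (t z)) (P (t (z + 1)))) (subcurve P (t z) (t (z + 1))) ≤ δ) :
    ∃ x y, 1 ≤ x ∧ x ≤ z ∧ z < y ∧ y ≤ m ∧ frechetDist (subcurve P (t x) (t y)) c ≤ δ + ε := by
  obtain ⟨hz, hzm, x, y, hx, hxz, hzy, hy, hfirst, hlast, hpoly⟩ := hz
  refine ⟨x, y, hx, hxz, hzy, hy, ?_⟩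
  have htxz : t x ≤ t z := le_of_monotoneOn_Icc ht hx hxz hzm.le
  have htz : t z ≤ t (z + 1) := le_of_monotoneOn_Icc ht hz z.le_succ hzm
  have htzy : t (z + 1) ≤ t y := le_of_monotoneOn_Icc ht z.succ_pos hzy hy
  have hPxy : ContinuousOn P (Icc (t x) (t y)) := hP.mono <| Icc_subset_Icc
    (le_of_monotoneOn_Icc ht le_rfl hx (hxz.trans hzm.le))
    (le_of_monotoneOn_Icc ht (z.succ_pos.trans_le hzy) hy le_rfl)
  have hsub := frechetDist_subcurve_polyline_three_le htxz htz htzy hPxy hfirst hedge hlast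
  exact (frechetDist_triangle (continuousOn_subcurve (htxz.trans (htz.trans htzy)) hPxy)
    (continuousOn_polyline _) hc).trans (add_le_add hsub hpoly)

end Clustering

theorem stmt9_general {d m : ℕ} {P : ℝ → Pt d} (hP : ContinuousOn P (Icc 0 1)) (hm : 2 ≤ m)
    {t : ℕ → ℝ} (ht0 : t 1 = 0) (ht1 : t m = 1) (ht : MonotoneOn t (Icc 1 m)) {Δ δ ε : ℝ}
    (hδ : 2 * Δ ≤ δ) (hcoverR : ∀ z, 1 ≤ z → z < m → ∃ Q, IsPolygonal Q 2 ∧ z ∈ rSet P m t Δ Q)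
    {C : Set (ℝ → Pt d)} (hC : ∀ c ∈ C, ContinuousOn c (Icc 0 1))
    (hcover : ∀ z, 1 ≤ z → z < m → ∃ c ∈ C, z ∈ rSimplified P m t δ ε c) :
    CostLE P m t C (δ + ε) := by
  have hP' : ContinuousOn P (Icc (t 1) (t m)) := by rwa [ht0, ht1]
  refine costLE_of_forall_exists hm ht0 ht1 ht fun z hz hzm => ?_
  obtain ⟨Q, hQ, hzQ⟩ := hcoverR z hz hzm
  obtain ⟨c, hcC, hzc⟩ := hcover z hz hzm
  have hedge := (frechetDist_edge_le_of_mem_rSet hP' ht hQ hzQ).trans hδ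
  obtain ⟨x, y, hx, hxz, hzy, hy, hfr⟩ :=
    exists_frechetDist_subcurve_le_of_mem_rSimplified hP' ht (hC c hcC) hzc hedge
  exact ⟨x, y, hx, hxz, hzy, hy, c, hcC, hfr⟩

/-- (`ℓ = 2`) If `R` admits a set cover and `S` is a set cover of
`R̃₂` of size `k`, then the `k` line segments `τ_{i,j}`, `r_{i,j} ∈ S`, form a set
of cluster centers `C` with `φ(P,C) ≤ 6Δ`. -/
theorem stmt9 {d : ℕ} (P : ℝ → Pt d) (hP : ContinuousOn P (Icc 0 1))
    (m : ℕ) (hm : 2 ≤ m) (t : ℕ → ℝ) (ht0 : t 1 = 0) (ht1 : t m = 1)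
    (htmono : ∀ i, 1 ≤ i → i < m → t i < t (i + 1))
    (Δ : ℝ) (hΔ : 0 < Δ) (xz yz : ℕ → ℕ)
    (hxz : ∀ z, 1 ≤ z → z < m →
      IsLeast {x | 1 ≤ x ∧ x ≤ z ∧ ∀ x', x ≤ x' → x' ≤ z →
        frechetDist (seg (P (t x')) (P (t z))) (subcurve P (t x') (t z)) ≤ 4 * Δ} (xz z))
    (hyz : ∀ z, 1 ≤ z → z < m →
      IsGreatest {y | z + 1 ≤ y ∧ y ≤ m ∧ ∀ y', z + 1 ≤ y' → y' ≤ y →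
        frechetDist (seg (P (t (z+1))) (P (t y'))) (subcurve P (t (z+1)) (t y')) ≤ 4 * Δ}
        (yz z))
    (hcoverR : ∀ z, 1 ≤ z → z < m → ∃ Q, IsPolygonal Q 2 ∧ z ∈ rSet P m t Δ Q)
    (k : ℕ) (ij : Fin k → ℕ × ℕ)
    (hij : ∀ s, 1 ≤ (ij s).1 ∧ (ij s).1 ≤ (ij s).2 ∧ (ij s).2 ≤ m)
    (hcover : ∀ z, 1 ≤ z → z < m →
      ∃ s, z ∈ rTilde2 P m t Δ xz yz (ij s).1 (ij s).2) :
    CostLE P m t {f | ∃ s, f = seg (P (t (ij s).1)) (P (t (ij s).2))} (6 * Δ) := by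
  have ht : StrictMonoOn t (Icc 1 m) :=
    strictMonoOn_of_lt_add_one ordConnected_Icc fun i _ hi hi' => htmono i hi.1 hi'.2
  have hsub (i j) : rTilde2 P m t Δ xz yz i j ⊆ rSimplified P m t (4 * Δ) (2 * Δ) _ :=
    rTilde2_subset_rSimplified (fun z hz hzm => (hxz z hz hzm).1.imp_right And.right)
      fun z hz hzm => (hyz z hz hzm).1.2
  rw [show 6 * Δ = 4 * Δ + 2 * Δ by ring]
  refine stmt9_general hP hm ht0 ht1 ht.monotoneOn (by linarith) hcoverR ?_ fun z hz hzm =>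
    (hcover z hz hzm).elim fun s hs => ⟨_, ⟨s, rfl⟩, hsub _ _ hs⟩
  rintro _ ⟨s, rfl⟩
  exact (continuous_seg _ _).continuousOn
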